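/- Consider the asynchronous fixed-point setting with T a pseudo-contraction with respect to the block-maximum norm with contraction modulus c ∈ (0,1) and fixed point x⋆, and define τ_k = k − min_{i∈[m]} min_{j∈[m]} s_{ij, t_i(k)} where t_i(k) = max{κ : κ ≤ k and κ ∈ K_i}. Suppose there exists a function Λ : ℝ → ℝ such that (i) Λ(0) = 1, (ii) Λ is non-increasing, and (iii) lim_{k→∞} Λ(k) = 0 and c·Λ(k − τ_k) ≤ Λ(k+1) for all k ≥ 0. Then the iterates {x_k} of the asynchronous iteration satisfy ‖x_k − x⋆‖ ≤ Λ(k)·‖x_0 − x⋆‖ in the block-maximum norm for all k ≥ 1. -/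

import Mathlib

/-!
At its last update time `t i k`, block `i` was recomputed from blocks of iterates no older than
`x (k - τ k)`, and it has not changed since. By strong induction all those blocks are within
`Λ (k - τ k) * ‖x 0 - xstar‖` of the fixed point, because `Λ` is antitone; one application of `T`
gains the factor `c`, and `c * Λ (k - τ k) ≤ Λ (k + 1)` closes the induction.
-/

section BlockMaxNorm

variable {ι : Type*} [Fintype ι] [Nonempty ι] {E : ι → Type*} [∀ i, SeminormedAddCommGroup (E i)]
  {w : ι → ℝ} {z : ∀ i, E i} {b : ℝ}

/-- The block-maximum norm `max_i w_i ‖z_i‖` with weights `w` on a finite nonempty product. It is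
a plain function, so that it does not compete with the norm of the product. -/
noncomputable def blockMaxNorm (w : ι → ℝ) (z : ∀ i, E i) : ℝ :=
  Finset.univ.sup' Finset.univ_nonempty fun i => w i * ‖z i‖

theorem mul_norm_le_blockMaxNorm (w : ι → ℝ) (z : ∀ i, E i) (i : ι) :
    w i * ‖z i‖ ≤ blockMaxNorm w z :=
  Finset.le_sup' (fun i => w i * ‖z i‖) (Finset.mem_univ i)

theorem blockMaxNorm_le (h : ∀ i, w i * ‖z i‖ ≤ b) : blockMaxNorm w z ≤ b :=
  Finset.sup'_le _ _ fun i _ => h i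

theorem blockMaxNorm_nonneg (hw : ∀ i, 0 ≤ w i) (z : ∀ i, E i) : 0 ≤ blockMaxNorm w z :=
  let i := Classical.arbitrary ι
  (mul_nonneg (hw i) (norm_nonneg (z i))).trans (mul_norm_le_blockMaxNorm w z i)

end BlockMaxNorm

section AsyncDelay

variable {ι : Type*} [Fintype ι] [Nonempty ι]

/-- The delay `τ_k = k - min_i min_j s_{ij, t_i(k)}`: the age at time `k` of the oldest information
used in the most recent update of some block, where block `i` was last updated at time `t i k`. -/
def asyncDelay (s : ι → ι → ℕ → ℕ) (t : ι → ℕ → ℕ) (k : ℕ) : ℕ :=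
  k - Finset.univ.inf' Finset.univ_nonempty fun i =>
    Finset.univ.inf' Finset.univ_nonempty fun j => s i j (t i k)

theorem asyncDelay_le (s : ι → ι → ℕ → ℕ) (t : ι → ℕ → ℕ) (k : ℕ) : asyncDelay s t k ≤ k :=
  Nat.sub_le _ _

theorem sub_asyncDelay_le {s : ι → ι → ℕ → ℕ} {t : ι → ℕ → ℕ} {k : ℕ} {i j : ι}
    (hle : s i j (t i k) ≤ k) : k - asyncDelay s t k ≤ s i j (t i k) := by
  have oldest_le : (Finset.univ.inf' Finset.univ_nonempty fun i =>
      Finset.univ.inf' Finset.univ_nonempty fun j => s i j (t i k)) ≤ s i j (t i k) :=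
    (Finset.inf'_le _ (Finset.mem_univ i)).trans (Finset.inf'_le _ (Finset.mem_univ j))
  rw [asyncDelay, Nat.sub_sub_self (oldest_le.trans hle)]
  exact oldest_le

end AsyncDelay

/-- `x` is an asynchronous iteration of `T` with update times `K` and information times `s`: at a
time `k ∈ K i`, block `i` is recomputed from the blocks `j` of the iterates at times `s i j k ≤ k`,
and at all other times it is left unchanged. -/
structure IsAsyncIteration {ι : Type*} {E : ι → Type*} (T : (∀ i, E i) → ∀ i, E i)
    (K : ι → Set ℕ) (s : ι → ι → ℕ → ℕ) (x : ℕ → ∀ i, E i) : Prop where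
  info_le : ∀ i j k, s i j k ≤ k
  update : ∀ k i, k ∈ K i → x (k + 1) i = T (fun j => x (s i j k) j) i
  skip : ∀ k i, k ∉ K i → x (k + 1) i = x k i

namespace IsAsyncIteration

section LastUpdate

variable {ι : Type*} {E : ι → Type*} {T : (∀ i, E i) → ∀ i, E i} {K : ι → Set ℕ}
  {s : ι → ι → ℕ → ℕ} {x : ℕ → ∀ i, E i} {i : ι}

theorem apply_eq_of_forall_notMem (hx : IsAsyncIteration T K s x) {a b : ℕ} (hab : a ≤ b)
    (hidle : ∀ n, a ≤ n → n < b → n ∉ K i) : x b i = x a i := by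
  induction b, hab using Nat.le_induction with
  | base => rfl
  | succ n han ih =>
    rw [hx.skip n i (hidle n han n.lt_succ_self)]
    exact ih fun l hal hln => hidle l hal (hln.trans n.lt_succ_self)

theorem succ_apply_eq_of_isGreatest (hx : IsAsyncIteration T K s x) {k u : ℕ}
    (hu : IsGreatest (K i ∩ Set.Iic k) u) : x (k + 1) i = T (fun j => x (s i j u) j) i := by
  have idle : ∀ n, u + 1 ≤ n → n < k + 1 → n ∉ K i := fun n hun hnk hn =>
    hun.not_gt (Nat.lt_succ_of_le (hu.2 ⟨hn, Nat.le_of_lt_succ hnk⟩))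
  rw [hx.apply_eq_of_forall_notMem (Nat.succ_le_succ hu.1.2) idle]
  exact hx.update u i hu.1.1

end LastUpdate

variable {ι : Type*} [Fintype ι] [Nonempty ι] {E : ι → Type*} [∀ i, SeminormedAddCommGroup (E i)]
  {T : (∀ i, E i) → ∀ i, E i} {K : ι → Set ℕ} {s : ι → ι → ℕ → ℕ} {x : ℕ → ∀ i, E i}

theorem blockMaxNorm_succ_sub_le (hx : IsAsyncIteration T K s x) {w : ι → ℝ} {c : ℝ} (hc : 0 ≤ c)
    {xstar : ∀ i, E i}
    (hT : ∀ z, blockMaxNorm w (T z - xstar) ≤ c * blockMaxNorm w (z - xstar))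
    {t : ι → ℕ} {k : ℕ} (ht : ∀ i, IsGreatest (K i ∩ Set.Iic k) (t i)) {b : ℝ}
    (hb : ∀ i j, w j * ‖x (s i j (t i)) j - xstar j‖ ≤ b) :
    blockMaxNorm w (x (k + 1) - xstar) ≤ c * b := by
  refine blockMaxNorm_le fun i => ?_
  let y : ∀ j, E j := fun j => x (s i j (t i)) j
  calc w i * ‖(x (k + 1) - xstar) i‖
      = w i * ‖(T y - xstar) i‖ := by
        rw [Pi.sub_apply, Pi.sub_apply, hx.succ_apply_eq_of_isGreatest (ht i)]
    _ ≤ blockMaxNorm w (T y - xstar) := mul_norm_le_blockMaxNorm w _ i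
    _ ≤ c * blockMaxNorm w (y - xstar) := hT y
    _ ≤ c * b := mul_le_mul_of_nonneg_left (blockMaxNorm_le (hb i)) hc

end IsAsyncIteration

theorem async_pseudocontraction_comparison_function_rate_general
    {ι : Type*} [Fintype ι] [Nonempty ι] {E : ι → Type*} [∀ i, SeminormedAddCommGroup (E i)]
    {w : ι → ℝ} (hw : ∀ i, 0 ≤ w i) {T : (∀ i, E i) → ∀ i, E i} {c : ℝ} (hc : 0 ≤ c)
    {xstar : ∀ i, E i}
    (hT : ∀ z, blockMaxNorm w (T z - xstar) ≤ c * blockMaxNorm w (z - xstar))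
    {K : ι → Set ℕ} {s : ι → ι → ℕ → ℕ} {x : ℕ → ∀ i, E i} (hx : IsAsyncIteration T K s x)
    {t : ι → ℕ → ℕ} (ht : ∀ i k, IsGreatest (K i ∩ Set.Iic k) (t i k))
    {Λ : ℕ → ℝ} (hΛ0 : 1 ≤ Λ 0) (hΛ : Antitone Λ)
    (hΛrec : ∀ k, c * Λ (k - asyncDelay s t k) ≤ Λ (k + 1)) (k : ℕ) :
    blockMaxNorm w (x k - xstar) ≤ Λ k * blockMaxNorm w (x 0 - xstar) := by
  have initial_nonneg := blockMaxNorm_nonneg hw (x 0 - xstar)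
  induction k using Nat.strong_induction_on with
  | _ k ih =>
    rcases k with _ | k
    · exact le_mul_of_one_le_left initial_nonneg hΛ0
    have info_le (i j : ι) : s i j (t i k) ≤ k := (hx.info_le i j _).trans (ht i k).1.2
    have outdated_error_le (i j : ι) : w j * ‖x (s i j (t i k)) j - xstar j‖ ≤
        Λ (k - asyncDelay s t k) * blockMaxNorm w (x 0 - xstar) :=
      calc w j * ‖x (s i j (t i k)) j - xstar j‖
          ≤ blockMaxNorm w (x (s i j (t i k)) - xstar) :=
          mul_norm_le_blockMaxNorm w (x (s i j (t i k)) - xstar) j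
        _ ≤ Λ (s i j (t i k)) * blockMaxNorm w (x 0 - xstar) :=
          ih _ (Nat.lt_succ_of_le (info_le i j))
        _ ≤ Λ (k - asyncDelay s t k) * blockMaxNorm w (x 0 - xstar) :=
          mul_le_mul_of_nonneg_right (hΛ (sub_asyncDelay_le (info_le i j))) initial_nonneg
    calc blockMaxNorm w (x (k + 1) - xstar)
        ≤ c * (Λ (k - asyncDelay s t k) * blockMaxNorm w (x 0 - xstar)) :=
          hx.blockMaxNorm_succ_sub_le hc hT (fun i => ht i k) outdated_error_le
      _ = c * Λ (k - asyncDelay s t k) * blockMaxNorm w (x 0 - xstar) := (mul_assoc _ _ _).symm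
      _ ≤ Λ (k + 1) * blockMaxNorm w (x 0 - xstar) :=
          mul_le_mul_of_nonneg_right (hΛrec k) initial_nonneg

/-- Theorem 7: convergence rate of asynchronous iterations of a
block-maximum-norm pseudo-contraction via a comparison function `Λ` satisfying
`Λ(0) = 1`, `Λ` non-increasing, `Λ(k) → 0` and `c·Λ(k − τ_k) ≤ Λ(k+1)`, where
`τ_k = k − min_i min_j s_{ij, t_i(k)}` and `t_i(k)` is the most recent update
time of agent `i`.  Then `‖x_k − x⋆‖ ≤ Λ(k)·‖x_0 − x⋆‖` (block-maximum norm)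
for all `k ≥ 1`.  In the condition on `Λ : ℝ → ℝ`, `k − τ_k` is taken in `ℝ`. -/
theorem async_pseudocontraction_comparison_function_rate
    {m : ℕ} (hm : 0 < m)
    (Bl : Fin m → Type*) [∀ i, NormedAddCommGroup (Bl i)]
    [∀ i, NormedSpace ℝ (Bl i)] [∀ i, FiniteDimensional ℝ (Bl i)]
    (w : Fin m → ℝ) (hw : ∀ i, 0 < w i)
    (bmNorm : (∀ i, Bl i) → ℝ)
    (hbm : ∀ z : ∀ i, Bl i, bmNorm z =
      (Finset.univ : Finset (Fin m)).sup'
        (Finset.univ_nonempty_iff.mpr ⟨⟨0, hm⟩⟩) (fun i => w i * ‖z i‖))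
    (T : (∀ i, Bl i) → (∀ i, Bl i))
    (c : ℝ) (hc0 : 0 < c) (hc1 : c < 1)
    (xstar : ∀ i, Bl i) (hfix : T xstar = xstar)
    (hcontr : ∀ z, bmNorm (T z - xstar) ≤ c * bmNorm (z - xstar))
    (K : Fin m → Set ℕ) (hK0 : ∀ i, 0 ∈ K i)
    (s : Fin m → Fin m → ℕ → ℕ)
    (hs_le : ∀ i j k, s i j k ≤ k)
    (x : ℕ → ∀ i, Bl i)
    (hupd : ∀ k : ℕ, ∀ i, k ∈ K i → x (k + 1) i = T (fun j => x (s i j k) j) i)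
    (hskip : ∀ k : ℕ, ∀ i, k ∉ K i → x (k + 1) i = x k i)
    (t : Fin m → ℕ → ℕ)
    (ht_mem : ∀ i k, t i k ≤ k ∧ t i k ∈ K i)
    (ht_max : ∀ i k κ, κ ≤ k → κ ∈ K i → κ ≤ t i k)
    (τk : ℕ → ℕ)
    (hτk : ∀ k, τk k = k -
      (Finset.univ : Finset (Fin m)).inf'
        (Finset.univ_nonempty_iff.mpr ⟨⟨0, hm⟩⟩)
        (fun i => (Finset.univ : Finset (Fin m)).inf'
          (Finset.univ_nonempty_iff.mpr ⟨⟨0, hm⟩⟩)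
          (fun j => s i j (t i k))))
    (Λ : ℝ → ℝ)
    (hΛ0 : Λ 0 = 1)
    (hΛmono : ∀ u v : ℝ, u ≤ v → Λ v ≤ Λ u)
    (hΛlim : Filter.Tendsto (fun k : ℕ => Λ k) Filter.atTop (nhds 0))
    (hΛrec : ∀ k : ℕ, c * Λ ((k : ℝ) - (τk k : ℝ)) ≤ Λ ((k : ℝ) + 1)) :
    ∀ k : ℕ, 1 ≤ k → bmNorm (x k - xstar) ≤ Λ k * bmNorm (x 0 - xstar) := by
  have : Nonempty (Fin m) := ⟨⟨0, hm⟩⟩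
  obtain rfl : bmNorm = blockMaxNorm w := funext hbm
  obtain rfl : τk = asyncDelay s t := funext hτk
  exact fun k _ => async_pseudocontraction_comparison_function_rate_general (Λ := fun n => Λ n)
    (fun i => (hw i).le) hc0.le hcontr ⟨hs_le, hupd, hskip⟩
    (fun i k => ⟨⟨(ht_mem i k).2, (ht_mem i k).1⟩, fun κ hκ => ht_max i k κ hκ.2 hκ.1⟩)
    (by simp [hΛ0]) (fun a b hab => hΛmono a b (Nat.cast_le.2 hab))
    (fun k => by simpa [Nat.cast_sub (asyncDelay_le s t k)] using hΛrec k) k
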